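/- Let T = T[0]T[1]...T[n-1] be a string of length n ≥ 1 over a linearly ordered alphabet such that T[n-1] is strictly smaller than every other symbol occurring in T and occurs only at position n-1. Let ISA be the inverse suffix array of T, and for 0 ≤ i < n define NSV_ISA(i) = min{ j : i < j < n, ISA[j] < ISA[i] } if such j exists and NSV_ISA(i) = n otherwise. Then for every 0 ≤ i < n, the length of the longest prefix of the suffix T_i that is a Lyndon word equals NSV_ISA(i) - i. -/

import Mathlib

/-- The suffix `T[i..n-1]` of the string of length `n` represented by `T : ℕ → α`. -/
def suffixAt {α : Type*} (T : ℕ → α) (n i : ℕ) : List α :=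
  (List.range (n - i)).map (fun k => T (i + k))

/-- A Lyndon word: a nonempty string strictly lexicographically smaller than
all of its proper nonempty suffixes. -/
def IsLyndon {α : Type*} [LinearOrder α] (w : List α) : Prop :=
  w ≠ [] ∧ ∀ i, 0 < i → i < w.length → List.Lex (· < ·) w (w.drop i)

/-- Length of the longest prefix of the suffix `T_i` that is a Lyndon word. -/
noncomputable def longestLyndonPrefixLen {α : Type*} [LinearOrder α] (T : ℕ → α) (n i : ℕ) : ℕ :=
  sSup {L | L ≤ n - i ∧ IsLyndon ((suffixAt T n i).take L)}

theorem lexApp {α : Type*} [LinearOrder α] {u v : List α} (h : List.Lex (· < ·) u v) :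
    v.length ≤ u.length → ∀ x y, List.Lex (· < ·) (u ++ x) (v ++ y) := by
  induction h with
  | nil => intro h; simp at h
  | cons _ ih =>
    intro h x y
    exact List.Lex.cons (ih (by simpa using h) x y)
  | rel h => intro _ x y; exact List.Lex.rel h

theorem lexSplit {α : Type*} [LinearOrder α] (v : List α) : ∀ (u x y : List α),
    v.length ≤ u.length → List.Lex (· < ·) (u ++ x) (v ++ y) →
    List.Lex (· < ·) u v ∨ (u.take v.length = v ∧ List.Lex (· < ·) (u.drop v.length ++ x) y) := by
  induction v with
  | nil => intro u x y _ h; right; simpa using h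
  | cons b v ih =>
    intro u x y hl h
    cases u with
    | nil => simp at hl
    | cons a u =>
      cases h with
      | rel h => exact Or.inl (List.Lex.rel h)
      | cons h =>
        rcases ih u x y (by simpa using hl) h with h | ⟨h1, h2⟩
        · exact Or.inl (List.Lex.cons h)
        · right; simpa [h1] using h2

theorem lexAsymm {α : Type*} [LinearOrder α] {u v : List α} (h : List.Lex (· < ·) u v)
    (h' : List.Lex (· < ·) v u) : False := by
  have h1 : u < v := h
  have h2 : v < u := h'
  exact lt_asymm h1 h2

theorem lexTrans {α : Type*} [LinearOrder α] {u v w : List α} (h : List.Lex (· < ·) u v)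
    (h' : List.Lex (· < ·) v w) : List.Lex (· < ·) u w := by
  have h1 : u < v := h
  have h2 : v < w := h'
  exact lt_trans h1 h2

theorem suffixAt_length {α : Type*} (T : ℕ → α) (n i : ℕ) : (suffixAt T n i).length = n - i := by
  simp [suffixAt]

theorem suffixAt_drop {α : Type*} (T : ℕ → α) (n i d : ℕ) :
    (suffixAt T n i).drop d = suffixAt T n (i + d) := by
  apply List.ext_getElem
  · simp [suffixAt]; omega
  · intro k h1 h2
    simp [suffixAt, Nat.add_assoc]

theorem suffixAt_split {α : Type*} (T : ℕ → α) (n i L : ℕ) :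
    (suffixAt T n i).take L ++ suffixAt T n (i + L) = suffixAt T n i := by
  rw [← suffixAt_drop, List.take_append_drop]

/-- The Lyndon array can be obtained from the inverse suffix array
`ISA = sa⁻¹` by a next-smaller-value computation: for every `i`, the length of the
longest Lyndon prefix of `T_i` equals `NSV_ISA(i) - i`, where `NSV_ISA(i)` is the
smallest `j > i` with `ISA[j] < ISA[i]` (or `n` if none exists). -/
theorem lyndonArray_from_isa_nsv {α : Type*} [LinearOrder α]
    (T : ℕ → α) (n : ℕ) (hn : 1 ≤ n)
    (hend : ∀ k, k < n - 1 → T (n - 1) < T k)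
    (sa : Equiv.Perm (Fin n))
    (hsa : ∀ a b : Fin n, a < b →
      List.Lex (· < ·) (suffixAt T n (sa a)) (suffixAt T n (sa b))) :
    ∀ i : Fin n,
      longestLyndonPrefixLen T n (i : ℕ) =
        sInf {j : ℕ | j = n ∨ ∃ h : j < n,
          (i : ℕ) < j ∧ (sa.symm ⟨j, h⟩ : ℕ) < (sa.symm i : ℕ)} - (i : ℕ) := by
  intro i
  have key : ∀ a b : Fin n, (sa.symm a : ℕ) < (sa.symm b : ℕ) →
      List.Lex (· < ·) (suffixAt T n a) (suffixAt T n b) := by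
    intro a b h
    have := hsa (sa.symm a) (sa.symm b) h
    simpa using this
  set S := {j : ℕ | j = n ∨ ∃ h : j < n,
          (i : ℕ) < j ∧ (sa.symm ⟨j, h⟩ : ℕ) < (sa.symm i : ℕ)} with hS
  have hmem : sInf S ∈ S := Nat.sInf_mem ⟨n, Or.inl rfl⟩
  have hmin : ∀ k ∈ S, sInf S ≤ k := fun k hk => Nat.sInf_le hk
  generalize sInf S = j at hmem hmin
  have hi := i.2
  have hjn : j ≤ n := hmin n (Or.inl rfl)
  have hij : (i : ℕ) < j := by
    rcases hmem with h | ⟨_, h, _⟩ <;> omega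
  have hbetween : ∀ k, (i : ℕ) < k → k < j →
      List.Lex (· < ·) (suffixAt T n i) (suffixAt T n k) := by
    intro k h1 h2
    have hk : k < n := by omega
    refine key i ⟨k, hk⟩ ?_
    rcases lt_trichotomy (sa.symm i : ℕ) (sa.symm ⟨k, hk⟩ : ℕ) with h | h | h
    · exact h
    · have := sa.symm.injective (Fin.ext h)
      have := congrArg Fin.val this
      simp at this; omega
    · have := hmin k (Or.inr ⟨hk, h1, h⟩)
      omega
  have hj : j < n → List.Lex (· < ·) (suffixAt T n j) (suffixAt T n i) := by
    intro h
    rcases hmem with h' | ⟨h1, _, h2⟩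
    · omega
    · exact key ⟨j, h1⟩ i h2
  have hgr : IsGreatest {L | L ≤ n - (i : ℕ) ∧ IsLyndon ((suffixAt T n i).take L)} (j - i) := by
    constructor
    · refine ⟨by omega, ?_, ?_⟩
      · intro h
        have := congrArg List.length h
        simp [suffixAt_length] at this
        omega
      · intro d hd hdl
        have hdl' : d < j - i := by simp [suffixAt_length] at hdl; omega
        rw [List.drop_take, suffixAt_drop]
        have hb := hbetween (i + d) (by omega) (by omega)
        have e1 := suffixAt_split T n i (j - i)
        have e2 := suffixAt_split T n (i + d) (j - i - d)
        rw [show (i : ℕ) + (j - i) = j by omega] at e1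
        rw [show (i : ℕ) + d + (j - i - d) = j by omega] at e2
        have hlen : ((suffixAt T n (i + d)).take (j - i - d)).length = j - i - d := by
          simp [suffixAt_length]; omega
        have hlen' : ((suffixAt T n i).take (j - i)).length = j - i := by
          simp [suffixAt_length]; omega
        rw [← e1, ← e2] at hb
        rcases lexSplit _ _ _ _ (by rw [hlen, hlen']; omega) hb with h | ⟨_, h⟩
        · exact h
        · exfalso
          rw [hlen, ← List.drop_append_of_le_length (by rw [hlen']; omega), e1,
            suffixAt_drop] at h
          rcases Nat.lt_or_ge j n with hjn' | hjn'
          · exact lexAsymm (lexTrans h (hj hjn')) (hbetween _ (by omega) (by omega))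
          · have : suffixAt T n j = [] := by
              apply List.eq_nil_of_length_eq_zero
              rw [suffixAt_length]; omega
            rw [this] at h
            exact List.not_lex_nil h
    · rintro L ⟨hL, _, hLy⟩
      by_contra hlt
      have hlt : j - i < L := by omega
      have h := hLy (j - i) (by omega) (by simp [suffixAt_length]; omega)
      rw [List.drop_take, suffixAt_drop, show (i : ℕ) + (j - i) = j by omega] at h
      have h2 := lexApp h (by simp [suffixAt_length]; omega)
        (suffixAt T n (i + L)) (suffixAt T n (j + (L - (j - i))))
      rw [suffixAt_split, suffixAt_split] at h2
      exact lexAsymm h2 (hj (by omega))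
  exact hgr.csSup_eq
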